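/- arXiv:math/0610023 — 4 statements merged into one kernel-verified Lean document; each statement's English description precedes it below -/
import Mathlib

section
/- Let Γ be a connected cubic graph of order n. Then γ_ô(Γ) = n/2 if and only if Γ is a bipartite graph, where γ_ô(Γ) is the global strong offensive alliance number of Γ. -/
/-- A nonempty set `S` of vertices is a *global strong offensive alliance* if every vertex
outside `S` has at least two more neighbors inside `S` than outside `S`. -/
def SimpleGraph.IsGlobalStrongOffensiveAlliance {V : Type*} (G : SimpleGraph V) (S : Set V) :
    Prop :=
  S.Nonempty ∧ ∀ v ∉ S, (G.neighborSet v \ S).ncard + 2 ≤ (G.neighborSet v ∩ S).ncard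

/-- The *global strong offensive alliance number*: the minimum cardinality of a global strong
offensive alliance. -/
noncomputable def SimpleGraph.globalStrongOffensiveAllianceNum {V : Type*} (G : SimpleGraph V) :
    ℕ :=
  sInf {k | ∃ S : Set V, G.IsGlobalStrongOffensiveAlliance S ∧ S.ncard = k}

/-!
In a graph all of whose degrees are 2 or 3, a vertex outside a set `S` has at least two more
neighbors inside `S` than outside exactly when all its neighbors lie in `S`. The global strong
offensive alliances are therefore the nonempty vertex covers. A vertex cover `S` of a regular graph
has at least half of the vertices: every edge at a vertex outside `S` ends in `S`, so `Sᶜ` emits at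
most as many edges as `S`. Equality holds exactly when no edge lies inside `S`, that is, when `S`
and `Sᶜ` are the two sides of a bipartition.
-/

open SimpleGraph

theorem ncard_sdiff_add_two_le_ncard_inter_iff_subset {α : Type*} {N S : Set α}
    (two_le : 2 ≤ N.ncard) (le_three : N.ncard ≤ 3) :
    (N \ S).ncard + 2 ≤ (N ∩ S).ncard ↔ N ⊆ S := by
  have finite_N : N.Finite := Set.finite_of_ncard_pos (by omega)
  have split := Set.ncard_inter_add_ncard_sdiff_eq_ncard N S finite_N
  rw [← Set.sdiff_eq_empty, ← Set.ncard_eq_zero finite_N.sdiff]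
  omega

section

variable {V : Type*} {G : SimpleGraph V}

theorem isVertexCover_iff_forall_neighborSet_subset {S : Set V} :
    G.IsVertexCover S ↔ ∀ v ∉ S, G.neighborSet v ⊆ S :=
  ⟨fun cover _ hv _ hvw ↦ (cover hvw).resolve_left hv,
    fun subset v _ hvw ↦ or_iff_not_imp_left.2 fun hv ↦ subset v hv hvw⟩

theorem isBipartiteWith_compl_of_isBipartiteWith {s t : Set V} (h : G.IsBipartiteWith s t) :
    G.IsBipartiteWith s sᶜ where
  disjoint := disjoint_compl_right
  mem_of_adj _ _ hvw := (h.mem_of_adj hvw).imp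
    (fun ⟨hv, hw⟩ ↦ ⟨hv, h.disjoint.subset_compl_left hw⟩)
    (fun ⟨hv, hw⟩ ↦ ⟨h.disjoint.subset_compl_left hv, hw⟩)

theorem isVertexCover_of_isBipartiteWith {s t : Set V} (h : G.IsBipartiteWith s t) :
    G.IsVertexCover s :=
  fun _ _ hvw ↦ (h.mem_of_adj hvw).imp And.left And.right

theorem ncard_neighborSet_eq_degree (v : V) [Fintype (G.neighborSet v)] :
    (G.neighborSet v).ncard = G.degree v := by
  rw [← card_neighborFinset_eq_degree, ← Set.ncard_coe_finset, coe_neighborFinset]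

variable [G.LocallyFinite]

theorem isGlobalStrongOffensiveAlliance_iff_nonempty_and_isVertexCover
    (two_le : ∀ v, 2 ≤ G.degree v) (le_three : ∀ v, G.degree v ≤ 3) {S : Set V} :
    G.IsGlobalStrongOffensiveAlliance S ↔ S.Nonempty ∧ G.IsVertexCover S := by
  simp only [← ncard_neighborSet_eq_degree] at two_le le_three
  simp only [IsGlobalStrongOffensiveAlliance, isVertexCover_iff_forall_neighborSet_subset,
    ncard_sdiff_add_two_le_ncard_inter_iff_subset (two_le _) (le_three _)]

theorem globalStrongOffensiveAllianceNum_eq_vertexCoverNum [Finite V] [Nonempty V]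
    (two_le : ∀ v, 2 ≤ G.degree v) (le_three : ∀ v, G.degree v ≤ 3) :
    (G.globalStrongOffensiveAllianceNum : ℕ∞) = G.vertexCoverNum := by
  have alliance_iff {S : Set V} :=
    isGlobalStrongOffensiveAlliance_iff_nonempty_and_isVertexCover two_le le_three (S := S)
  apply le_antisymm
  · obtain ⟨S, card_S, cover⟩ := G.vertexCoverNum_exists
    have nonempty_S : S.Nonempty := by
      obtain ⟨v⟩ := ‹Nonempty V›
      obtain ⟨w, hvw⟩ := (G.degree_pos_iff_exists_adj v).1 (two_pos.trans_le (two_le v))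
      exact (cover hvw).elim (⟨v, ·⟩) (⟨w, ·⟩)
    rw [← card_S, ← S.toFinite.cast_ncard_eq, Nat.cast_le]
    exact Nat.sInf_le ⟨S, alliance_iff.2 ⟨nonempty_S, cover⟩, rfl⟩
  · have exists_alliance :
        {k | ∃ S : Set V, G.IsGlobalStrongOffensiveAlliance S ∧ S.ncard = k}.Nonempty :=
      ⟨_, Set.univ, alliance_iff.2 ⟨Set.univ_nonempty, isVertexCover_univ⟩, rfl⟩
    obtain ⟨S, alliance, card_S⟩ := Nat.sInf_mem exists_alliance
    rw [globalStrongOffensiveAllianceNum, ← card_S, S.toFinite.cast_ncard_eq]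
    exact (alliance_iff.1 alliance).2.vertexCoverNum_le

section DoubleCounting

variable [Fintype V] [DecidableEq V] {S : Finset V}

theorem sum_degree_compl_eq_sum_degree_between [(G.between S ↑Sᶜ).LocallyFinite]
    (cover : G.IsVertexCover S) :
    ∑ v ∈ Sᶜ, G.degree v = ∑ v ∈ S, (G.between S ↑Sᶜ).degree v := by
  have disjoint_compl : Disjoint (S : Set V) ↑Sᶜ := Finset.disjoint_coe.2 disjoint_compl_right
  rw [isBipartiteWith_sum_degrees_eq (between_isBipartiteWith disjoint_compl)]
  refine Finset.sum_congr rfl fun v hv ↦ ?_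
  have neighborSet_eq : G.neighborSet v = (G.between S ↑Sᶜ).neighborSet v := by
    ext w
    simp only [mem_neighborSet, between_adj, iff_self_and]
    have hv : v ∉ S := Finset.mem_compl.1 hv
    exact fun hvw ↦ .inr ⟨by simpa using hv, (cover hvw).resolve_left hv⟩
  rw [← ncard_neighborSet_eq_degree, ← ncard_neighborSet_eq_degree, neighborSet_eq]

theorem sum_degree_compl_le_sum_degree (cover : G.IsVertexCover S) :
    ∑ v ∈ Sᶜ, G.degree v ≤ ∑ v ∈ S, G.degree v := by
  classical
  rw [sum_degree_compl_eq_sum_degree_between cover]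
  exact Finset.sum_le_sum fun v _ ↦ degree_le_of_le between_le

theorem sum_degree_compl_eq_sum_degree_iff_isBipartiteWith (cover : G.IsVertexCover S) :
    ∑ v ∈ Sᶜ, G.degree v = ∑ v ∈ S, G.degree v ↔ G.IsBipartiteWith S ↑Sᶜ := by
  classical
  refine ⟨fun sum_eq ↦ ?_, fun h ↦ (isBipartiteWith_sum_degrees_eq h).symm⟩
  rw [sum_degree_compl_eq_sum_degree_between cover,
    Finset.sum_eq_sum_iff_of_le fun v _ ↦ degree_le_of_le between_le] at sum_eq
  have adj_between {v w : V} (hv : v ∈ S) (hvw : G.Adj v w) : (G.between S ↑Sᶜ).Adj v w := by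
    have neighborFinset_eq : (G.between S ↑Sᶜ).neighborFinset v = G.neighborFinset v :=
      Finset.eq_of_subset_of_card_le (Set.toFinset_mono (neighborSet_mono between_le v))
        (by simpa only [card_neighborFinset_eq_degree] using (sum_eq v hv).ge)
    rwa [← mem_neighborFinset, neighborFinset_eq, mem_neighborFinset]
  exact ⟨Finset.disjoint_coe.2 disjoint_compl_right, fun v w hvw ↦
    (cover hvw).elim (fun hv ↦ (adj_between hv hvw).2) fun hw ↦ (adj_between hw hvw.symm).symm.2⟩

end DoubleCounting

section Regular

variable [Fintype V] {d : ℕ}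

theorem card_le_two_mul_card_of_isVertexCover (regular : G.IsRegularOfDegree d) (hd : d ≠ 0)
    {S : Finset V} (cover : G.IsVertexCover S) : Fintype.card V ≤ 2 * S.card := by
  classical
  have card_mul_le := sum_degree_compl_le_sum_degree cover
  simp only [regular.degree_eq, Finset.sum_const, smul_eq_mul] at card_mul_le
  have card_compl_le := Nat.le_of_mul_le_mul_right card_mul_le hd.pos
  have := S.card_add_card_compl
  omega

theorem card_eq_two_mul_card_iff_isBipartiteWith (regular : G.IsRegularOfDegree d) (hd : d ≠ 0)
    {S : Finset V} (cover : G.IsVertexCover S) :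
    Fintype.card V = 2 * S.card ↔ G.IsBipartiteWith S (S : Set V)ᶜ := by
  classical
  have card_compl_eq_iff := sum_degree_compl_eq_sum_degree_iff_isBipartiteWith cover
  simp only [regular.degree_eq, Finset.sum_const, smul_eq_mul, Nat.mul_left_inj hd,
    Finset.coe_compl] at card_compl_eq_iff
  rw [← card_compl_eq_iff]
  have := S.card_add_card_compl
  omega

theorem card_eq_two_mul_vertexCoverNum_iff_isBipartite (regular : G.IsRegularOfDegree d)
    (hd : d ≠ 0) : (Fintype.card V : ℕ∞) = 2 * G.vertexCoverNum ↔ G.IsBipartite := by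
  obtain ⟨S, card_S, cover_S⟩ := G.vertexCoverNum_exists
  lift S to Finset V using S.toFinite
  rw [Set.encard_coe_eq_coe_finsetCard] at card_S
  rw [← card_S]
  norm_cast
  refine ⟨fun h ↦ ((card_eq_two_mul_card_iff_isBipartiteWith regular hd cover_S).1 h).isBipartite,
    fun bipartite ↦ (card_le_two_mul_card_of_isVertexCover regular hd cover_S).antisymm ?_⟩
  obtain ⟨A, _, bipartition⟩ := bipartite.exists_isBipartiteWith
  lift A to Finset V using A.toFinite
  have cover_A := isVertexCover_of_isBipartiteWith bipartition
  have card_le : S.card ≤ A.card := by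
    simpa [← card_S] using cover_A.vertexCoverNum_le
  rw [(card_eq_two_mul_card_iff_isBipartiteWith regular hd cover_A).2
    (isBipartiteWith_compl_of_isBipartiteWith bipartition)]
  omega

end Regular

theorem stmt_1_general [Fintype V] [Nonempty V] {d : ℕ}
    (two_le : 2 ≤ d) (le_three : d ≤ 3) (regular : G.IsRegularOfDegree d) :
    (G.globalStrongOffensiveAllianceNum : ℝ) = Fintype.card V / 2 ↔ G.Colorable 2 := by
  rw [← IsBipartite, ← card_eq_two_mul_vertexCoverNum_iff_isBipartite regular (by omega),
    ← globalStrongOffensiveAllianceNum_eq_vertexCoverNum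
      (fun v ↦ (regular v).symm ▸ two_le) (fun v ↦ (regular v).symm ▸ le_three),
    eq_div_iff two_ne_zero, mul_comm, eq_comm]
  norm_cast

end

theorem stmt_1 {V : Type*} [Fintype V] (G : SimpleGraph V)
    (hconn : G.Connected) (hcubic : ∀ v : V, (G.neighborSet v).ncard = 3) :
    (G.globalStrongOffensiveAllianceNum : ℝ) = Fintype.card V / 2 ↔ G.Colorable 2 := by
  classical
  have := hconn.nonempty
  exact stmt_1_general (d := 3) (by norm_num) le_rfl fun v ↦
    (ncard_neighborSet_eq_degree v).symm.trans (hcubic v)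
end

section
/- Let Γ be a connected cubic graph of order n. Then 2n/5 ≤ γ_o(Γ) ≤ n/2, where γ_o(Γ) is the global offensive alliance number of Γ. -/
/-- A nonempty set `S` of vertices is a *global offensive alliance* if every vertex
outside `S` has strictly more neighbors inside `S` than outside `S`. -/
def SimpleGraph.IsGlobalOffensiveAlliance {V : Type*} (G : SimpleGraph V) (S : Set V) : Prop :=
  S.Nonempty ∧ ∀ v ∉ S, (G.neighborSet v \ S).ncard + 1 ≤ (G.neighborSet v ∩ S).ncard

/-- The *global offensive alliance number*: the minimum cardinality of a global offensive
alliance. -/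
noncomputable def SimpleGraph.globalOffensiveAllianceNum {V : Type*} (G : SimpleGraph V) : ℕ :=
  sInf {k | ∃ S : Set V, G.IsGlobalOffensiveAlliance S ∧ S.ncard = k}

/-!
The lower bound double counts the edges leaving a global offensive alliance `S`: in a graph of
degree `2k + 1`, each of the `n - |S|` outside vertices receives at least `k + 1` of them, and each
vertex of `S` emits at most `2k + 1`.

For the upper bound, take a partition of the vertices into two parts minimizing the quadratic form
of the adjacency matrix on sign vectors, that is, a maximum cut. Moving one vertex to the other part
cannot enlarge the cut, so every vertex has at least as many neighbors across the cut as on its own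
side. As the degrees are odd, there is no tie, so both parts are global offensive alliances, and
the smaller one has at most `n / 2` vertices.
-/

open Matrix

section SignVector

variable {ι R : Type*} [Fintype ι]

lemma dotProduct_mulVec_add_single [DecidableEq ι] [CommRing R] {A : Matrix ι ι R}
    (hA : A.IsSymm) (x : ι → R) (i : ι) (c : R) :
    (x + Pi.single i c) ⬝ᵥ A *ᵥ (x + Pi.single i c) =
      x ⬝ᵥ A *ᵥ x + 2 * c * (A *ᵥ x) i + c ^ 2 * A i i := by
  have cross_symm : x ⬝ᵥ A *ᵥ Pi.single i c = Pi.single i c ⬝ᵥ A *ᵥ x := by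
    rw [dotProduct_mulVec, ← mulVec_transpose, hA.eq, dotProduct_comm]
  have diag : Pi.single i c ⬝ᵥ A *ᵥ Pi.single i c = c ^ 2 * A i i := by
    simp only [single_dotProduct, mulVec_single, Pi.smul_apply, col_apply,
      MulOpposite.smul_eq_mul_unop, MulOpposite.unop_op]
    ring
  rw [mulVec_add, add_dotProduct, dotProduct_add, dotProduct_add, cross_symm, diag,
    single_dotProduct]
  ring

lemma dotProduct_mulVec_update_neg [DecidableEq ι] [CommRing R] {A : Matrix ι ι R}
    (hA : A.IsSymm) (x : ι → R) (i : ι) :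
    Function.update x i (-x i) ⬝ᵥ A *ᵥ Function.update x i (-x i) =
      x ⬝ᵥ A *ᵥ x - 4 * (x i * (A *ᵥ x) i - x i ^ 2 * A i i) := by
  have update_eq : Function.update x i (-x i) = x + Pi.single i (-2 * x i) := by
    ext j
    obtain rfl | hj := eq_or_ne j i
    · simp only [Function.update_self, Pi.add_apply, Pi.single_eq_same]
      ring
    · simp [hj]
  rw [update_eq, dotProduct_mulVec_add_single hA]
  ring

lemma exists_sign_mul_mulVec_le_diag [CommRing R] [LinearOrder R] [IsStrictOrderedRing R]
    {A : Matrix ι ι R} (hA : A.IsSymm) :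
    ∃ s : ι → R, (∀ i, s i = 1 ∨ s i = -1) ∧ ∀ i, s i * (A *ᵥ s) i ≤ A i i := by
  classical
  have finite_signs : {s : ι → R | ∀ i, s i = 1 ∨ s i = -1}.Finite :=
    Set.Finite.pi' fun _ => Set.toFinite {1, -1}
  obtain ⟨s, hs, hmin⟩ := Set.exists_min_image _ (fun s => s ⬝ᵥ A *ᵥ s) finite_signs
    ⟨1, fun _ => Or.inl rfl⟩
  refine ⟨s, hs, fun i => ?_⟩
  have flip_sign : ∀ j, Function.update s i (-s i) j = 1 ∨ Function.update s i (-s i) j = -1 := by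
    intro j
    obtain rfl | hj := eq_or_ne j i
    · simpa [neg_eq_iff_eq_neg, or_comm] using hs j
    · simpa [hj] using hs j
  have flip_ge := hmin _ flip_sign
  have sq_sign : s i ^ 2 = 1 := sq_eq_one_iff.2 (hs i)
  rw [dotProduct_mulVec_update_neg hA, sq_sign] at flip_ge
  linarith

end SignVector

section Unfriendly

variable {V : Type*} {G : SimpleGraph V} {S : Set V}

/-- The partition of the vertices into `S` and `Sᶜ` is *unfriendly* if every vertex has at least as
many neighbors in the other part as in its own. Counts are `Set.ncard`, so this is meaningful only
when the degrees are finite. -/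
def IsUnfriendlyPartition (G : SimpleGraph V) (S : Set V) : Prop :=
  (∀ v ∈ S, (G.neighborSet v ∩ S).ncard ≤ (G.neighborSet v \ S).ncard) ∧
    ∀ v ∉ S, (G.neighborSet v \ S).ncard ≤ (G.neighborSet v ∩ S).ncard

lemma IsUnfriendlyPartition.compl (h : IsUnfriendlyPartition G S) :
    IsUnfriendlyPartition G Sᶜ := by
  simpa only [IsUnfriendlyPartition, Set.mem_compl_iff, not_not, Set.sdiff_compl, ← Set.sdiff_eq]
    using h.symm

lemma adjMatrix_mulVec_sign_apply {R : Type*} [Ring R] [Fintype V] [DecidableRel G.Adj]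
    [DecidablePred (· ∈ S)] (v : V) :
    (G.adjMatrix R *ᵥ fun u => if u ∈ S then 1 else -1) v =
      (G.neighborSet v ∩ S).ncard - (G.neighborSet v \ S).ncard := by
  classical
  have inter_eq : G.neighborSet v ∩ S = {u ∈ G.neighborFinset v | u ∈ S} := by ext; simp
  have sdiff_eq : G.neighborSet v \ S = {u ∈ G.neighborFinset v | u ∉ S} := by ext; simp
  rw [G.adjMatrix_mulVec_apply, Finset.sum_ite, inter_eq, sdiff_eq, Set.ncard_coe_finset,
    Set.ncard_coe_finset]
  simp [sub_eq_add_neg]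

lemma exists_isUnfriendlyPartition [Finite V] (G : SimpleGraph V) :
    ∃ S, IsUnfriendlyPartition G S := by
  classical
  have := Fintype.ofFinite V
  obtain ⟨s, hs, hle⟩ := exists_sign_mul_mulVec_le_diag (G.isSymm_adjMatrix (α := ℤ))
  let S := {v | s v = 1}
  have s_eq : s = fun v => if v ∈ S then 1 else -1 := by
    ext v
    obtain h | h := hs v <;> simp [S, h]
  have sign_mul_sub_le (v : V) : (if v ∈ S then 1 else -1) *
      (((G.neighborSet v ∩ S).ncard : ℤ) - (G.neighborSet v \ S).ncard) ≤ 0 := by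
    have sign_mul_le := hle v
    rwa [s_eq, adjMatrix_mulVec_sign_apply, G.adjMatrix_apply, if_neg (G.irrefl)] at sign_mul_le
  refine ⟨S, fun v hv => ?_, fun v hv => ?_⟩
  · simpa [hv] using sign_mul_sub_le v
  · simpa [hv] using sign_mul_sub_le v

end Unfriendly

section GlobalOffensiveAlliance

variable {V : Type*} {G : SimpleGraph V} {S : Set V}

lemma isGlobalOffensiveAlliance_iff [Nonempty V] :
    G.IsGlobalOffensiveAlliance S ↔
      ∀ v ∉ S, (G.neighborSet v \ S).ncard + 1 ≤ (G.neighborSet v ∩ S).ncard := by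
  refine ⟨And.right, fun h => ⟨?_, h⟩⟩
  by_contra hempty
  obtain rfl := Set.not_nonempty_iff_eq_empty.1 hempty
  obtain ⟨v⟩ := ‹Nonempty V›
  simpa using h v (Set.notMem_empty v)

lemma exists_ncard_eq_globalOffensiveAllianceNum [Nonempty V] (G : SimpleGraph V) :
    ∃ S, G.IsGlobalOffensiveAlliance S ∧ S.ncard = G.globalOffensiveAllianceNum :=
  Nat.sInf_mem (s := {k | ∃ S, G.IsGlobalOffensiveAlliance S ∧ S.ncard = k})
    ⟨_, Set.univ, isGlobalOffensiveAlliance_iff.2 fun v hv => absurd (Set.mem_univ v) hv, rfl⟩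

lemma globalOffensiveAllianceNum_le_ncard (hS : G.IsGlobalOffensiveAlliance S) :
    G.globalOffensiveAllianceNum ≤ S.ncard :=
  Nat.sInf_le ⟨S, hS, rfl⟩

lemma IsUnfriendlyPartition.isGlobalOffensiveAlliance [Nonempty V]
    (h : IsUnfriendlyPartition G S) (hodd : ∀ v, Odd (G.neighborSet v).ncard) :
    G.IsGlobalOffensiveAlliance S := by
  refine isGlobalOffensiveAlliance_iff.2 fun v hv => (h.2 v hv).lt_of_ne fun tie => ?_
  have degree_eq := Set.ncard_inter_add_ncard_sdiff_eq_ncard (G.neighborSet v) S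
    (Set.finite_of_ncard_ne_zero (hodd v).pos.ne')
  exact Nat.not_odd_iff_even.2 ⟨_, by rw [← degree_eq, tie]⟩ (hodd v)

variable [Finite V]

lemma two_mul_globalOffensiveAllianceNum_le_card [Nonempty V]
    (hodd : ∀ v, Odd (G.neighborSet v).ncard) :
    2 * G.globalOffensiveAllianceNum ≤ Nat.card V := by
  obtain ⟨S, hS⟩ := exists_isUnfriendlyPartition G
  calc 2 * G.globalOffensiveAllianceNum
      = G.globalOffensiveAllianceNum + G.globalOffensiveAllianceNum := two_mul _
    _ ≤ S.ncard + Sᶜ.ncard := add_le_add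
        (globalOffensiveAllianceNum_le_ncard (hS.isGlobalOffensiveAlliance hodd))
        (globalOffensiveAllianceNum_le_ncard (hS.compl.isGlobalOffensiveAlliance hodd))
    _ = Nat.card V := Set.ncard_add_ncard_compl S

lemma half_ncard_neighborSet_lt_ncard_inter
    (hS : G.IsGlobalOffensiveAlliance S) {v : V} (hv : v ∉ S) :
    (G.neighborSet v).ncard / 2 < (G.neighborSet v ∩ S).ncard := by
  have degree_eq := Set.ncard_inter_add_ncard_sdiff_eq_ncard (G.neighborSet v) S
  have offensive := hS.2 v hv
  omega

lemma ncard_compl_mul_le_ncard_mul {δ Δ : ℕ} (hS : G.IsGlobalOffensiveAlliance S)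
    (hδ : ∀ v, δ ≤ (G.neighborSet v).ncard) (hΔ : ∀ v, (G.neighborSet v).ncard ≤ Δ) :
    Sᶜ.ncard * (δ / 2 + 1) ≤ S.ncard * Δ := by
  classical
  have := Fintype.ofFinite V
  rw [Set.ncard_eq_toFinset_card' S, Set.ncard_eq_toFinset_card' Sᶜ]
  refine Finset.card_mul_le_card_mul G.Adj (fun v hv => ?_) fun w _ => ?_
  · have above_eq : (S.toFinset.bipartiteAbove G.Adj v : Set V) = G.neighborSet v ∩ S := by
      ext
      simp [and_comm]
    rw [← Set.ncard_coe_finset, above_eq]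
    exact (Nat.div_le_div_right (hδ v)).trans_lt
      (half_ncard_neighborSet_lt_ncard_inter hS (by simpa using hv))
  · have below_subset : (Sᶜ.toFinset.bipartiteBelow G.Adj w : Set V) ⊆ G.neighborSet w := by
      intro v hv
      simp_all [G.adj_comm]
    rw [← Set.ncard_coe_finset]
    exact (Set.ncard_le_ncard below_subset).trans (hΔ w)

end GlobalOffensiveAlliance

theorem stmt_10_general {V : Type*} [Fintype V] [Nonempty V] (G : SimpleGraph V) (k : ℕ)
    (hreg : ∀ v : V, (G.neighborSet v).ncard = 2 * k + 1) :
    (k + 1) * (Fintype.card V : ℝ) / (3 * k + 2) ≤ G.globalOffensiveAllianceNum ∧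
      (G.globalOffensiveAllianceNum : ℝ) ≤ Fintype.card V / 2 := by
  rw [Fintype.card_eq_nat_card]
  constructor
  · obtain ⟨S, hS, hcard⟩ := exists_ncard_eq_globalOffensiveAllianceNum G
    have edge_count := ncard_compl_mul_le_ncard_mul hS (fun v => (hreg v).ge) fun v => (hreg v).le
    rw [show (2 * k + 1) / 2 = k by omega] at edge_count
    rw [div_le_iff₀ (by positivity), ← hcard, ← Set.ncard_add_ncard_compl S]
    norm_cast
    linarith
  · have upper := two_mul_globalOffensiveAllianceNum_le_card (G := G) fun v => ⟨k, hreg v⟩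
    rw [le_div_iff₀' two_pos]
    exact_mod_cast upper

theorem stmt_10 {V : Type*} [Fintype V] (G : SimpleGraph V)
    (hconn : G.Connected) (hcubic : ∀ v : V, (G.neighborSet v).ncard = 3) :
    2 * (Fintype.card V : ℝ) / 5 ≤ G.globalOffensiveAllianceNum ∧
      (G.globalOffensiveAllianceNum : ℝ) ≤ Fintype.card V / 2 := by
  have := hconn.nonempty
  convert stmt_10_general G 1 hcubic using 2
  norm_num
end

section
/- Let Γ be a connected cubic graph. Then Γ has a global strong offensive alliance that is an independent set if and only if Γ is a bipartite graph. -/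
/-- A set of vertices is *independent* if its elements are pairwise nonadjacent. -/
def SimpleGraph.IsIndepVertexSet {V : Type*} (G : SimpleGraph V) (S : Set V) : Prop :=
  S.Pairwise fun u v => ¬ G.Adj u v

/-!
At a vertex `v` of degree two or three outside `S` the alliance inequality leaves no room for a
neighbor outside `S`, so global strong offensive alliances are exactly the vertex covers. An
independent vertex cover is one of the two parts of a bipartition.
-/

theorem ncard_sdiff_add_two_le_ncard_inter_iff_subset_s13 {α : Type*} {s t : Set α}
    (hs : s.ncard ∈ Set.Icc 2 3) : (s \ t).ncard + 2 ≤ (s ∩ t).ncard ↔ s ⊆ t := by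
  obtain ⟨htwo_le, hle_three⟩ := hs
  have hfin : s.Finite := Set.finite_of_ncard_pos (Nat.zero_lt_two.trans_le htwo_le)
  have hsplit : (s ∩ t).ncard + (s \ t).ncard = s.ncard :=
    Set.ncard_inter_add_ncard_sdiff_eq_ncard s t hfin
  rw [← Set.sdiff_eq_empty, ← Set.ncard_eq_zero hfin.sdiff]
  lia

section

variable {V : Type*} {G : SimpleGraph V} {S : Set V}

theorem isVertexCover_iff_forall_notMem_neighborSet_subset :
    G.IsVertexCover S ↔ ∀ v ∉ S, G.neighborSet v ⊆ S :=
  ⟨fun hS _ hv _ hvw ↦ (hS hvw).resolve_left hv,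
    fun hS v _ hvw ↦ or_iff_not_imp_left.mpr fun hv ↦ hS v hv hvw⟩

theorem isGlobalStrongOffensiveAlliance_iff_isVertexCover [Nonempty V]
    (hdeg : ∀ v, (G.neighborSet v).ncard ∈ Set.Icc 2 3) :
    G.IsGlobalStrongOffensiveAlliance S ↔ G.IsVertexCover S := by
  have hne_bot : G ≠ ⊥ := by
    rintro rfl
    simpa using hdeg (Classical.arbitrary V)
  have hnonempty (hS : G.IsVertexCover S) : S.Nonempty := by
    rw [Set.nonempty_iff_ne_empty]
    rintro rfl
    exact hne_bot (SimpleGraph.isVertexCover_empty.mp hS)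
  simp only [SimpleGraph.IsGlobalStrongOffensiveAlliance,
    ncard_sdiff_add_two_le_ncard_inter_iff_subset_s13 (hdeg _),
    ← isVertexCover_iff_forall_notMem_neighborSet_subset]
  exact and_iff_right_of_imp hnonempty

theorem isBipartiteWith_compl_iff :
    G.IsBipartiteWith S Sᶜ ↔ G.IsVertexCover S ∧ G.IsIndepSet S where
  mp h := ⟨fun _ _ hvw ↦ (h.mem_of_adj hvw).imp And.left And.right,
    fun _ hv _ hw _ hvw ↦ h.mem_of_mem_adj hv hvw hw⟩
  mpr := fun ⟨hcover, hindep⟩ ↦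
    { disjoint := disjoint_compl_right
      mem_of_adj := fun _ _ hvw ↦ (hcover hvw).imp
        (fun hv ↦ ⟨hv, fun hw ↦ hindep hv hw hvw.ne hvw⟩)
        (fun hw ↦ ⟨fun hv ↦ hindep hv hw hvw.ne hvw, hw⟩) }

theorem isBipartite_iff_exists_isBipartiteWith_compl :
    G.IsBipartite ↔ ∃ S : Set V, G.IsBipartiteWith S Sᶜ := by
  refine ⟨fun h ↦ ?_, fun ⟨_, h⟩ ↦ h.isBipartite⟩
  obtain ⟨S, T, hST⟩ := h.exists_isBipartiteWith
  have hT : T ⊆ Sᶜ := hST.disjoint.subset_compl_left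
  exact ⟨S, disjoint_compl_right, fun _ _ hvw ↦
    (hST.mem_of_adj hvw).imp (And.imp_right (hT ·)) (And.imp_left (hT ·))⟩

end

theorem stmt_13_general {V : Type*} [Nonempty V] (G : SimpleGraph V)
    (hdeg : ∀ v : V, (G.neighborSet v).ncard ∈ Set.Icc 2 3) :
    (∃ S : Set V, G.IsGlobalStrongOffensiveAlliance S ∧ G.IsIndepVertexSet S) ↔
      G.Colorable 2 :=
  calc (∃ S : Set V, G.IsGlobalStrongOffensiveAlliance S ∧ G.IsIndepVertexSet S)
    _ ↔ ∃ S : Set V, G.IsVertexCover S ∧ G.IsIndepSet S :=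
      exists_congr fun _ ↦
        and_congr_left' (isGlobalStrongOffensiveAlliance_iff_isVertexCover hdeg)
    _ ↔ ∃ S : Set V, G.IsBipartiteWith S Sᶜ := exists_congr fun _ ↦ isBipartiteWith_compl_iff.symm
    _ ↔ G.Colorable 2 := isBipartite_iff_exists_isBipartiteWith_compl.symm

theorem stmt_13 {V : Type*} [Fintype V] (G : SimpleGraph V)
    (hconn : G.Connected) (hcubic : ∀ v : V, (G.neighborSet v).ncard = 3) :
    (∃ S : Set V, G.IsGlobalStrongOffensiveAlliance S ∧ G.IsIndepVertexSet S) ↔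
      G.Colorable 2 := by
  have := hconn.nonempty
  exact stmt_13_general G fun v ↦ by simp [hcubic v]
end

section
/- Let Γ=(V,E) be a connected cubic graph of order n that has a global independent offensive alliance. Then γ_i(Γ) = 2n/5 if and only if there exists an independent set X ⊆ V such that the subgraph induced by V∖X is a 1-factor of size 3n/10 (i.e., every vertex of V∖X has exactly one neighbor in V∖X, so the induced subgraph is a perfect matching on V∖X consisting of 3n/10 edges). Here γ_i(Γ) is the global independent offensive alliance number of Γ. -/
/-- The *global independent offensive alliance number*: the minimum cardinality of a global
offensive alliance which is also an independent set. -/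
noncomputable def SimpleGraph.globalIndepOffensiveAllianceNum {V : Type*}
    (G : SimpleGraph V) : ℕ :=
  sInf {k | ∃ S : Set V,
    G.IsGlobalOffensiveAlliance S ∧ G.IsIndepVertexSet S ∧ S.ncard = k}

/-!
Write `d` for the degree and `k = d / 2 + 1`. In a `d`-regular graph the offensive alliance
condition says that every vertex outside `S` has at least `k` neighbors in `S`. If `S` is
independent, counting the edges between `S` and its complement gives `k (n - |S|) ≤ d |S|`, with
equality exactly when every vertex outside `S` has exactly `k` neighbors in `S`, hence
`d - k = (d - 1) / 2` outside; in the cubic case, when the complement induces a perfect matching.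
A set of the latter kind is itself an alliance, and its size attains the lower bound.
-/

/-- `S` is a *`k`-dominating set* of `G`: every vertex outside `S` has at least `k` neighbors in
`S`. In a regular graph this is the alliance condition, for a suitable `k`. -/
def IsKDominatingSet {V : Type*} (G : SimpleGraph V) (k : ℕ) (S : Set V) : Prop :=
  ∀ v ∉ S, k ≤ (G.neighborSet v ∩ S).ncard

section

variable {V : Type*} {G : SimpleGraph V} {d k : ℕ}

section DoubleCounting

lemma sum_ncard_neighborSet_inter_comm (A B : Finset V) :
    ∑ v ∈ A, (G.neighborSet v ∩ B).ncard = ∑ v ∈ B, (G.neighborSet v ∩ A).ncard := by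
  classical
  have ncard_eq (C : Finset V) (v : V) :
      (G.neighborSet v ∩ C).ncard = (C.bipartiteAbove G.Adj v).card := by
    rw [← Set.ncard_coe_finset, Finset.coe_bipartiteAbove, Set.inter_comm]
    rfl
  have below_eq_above (v : V) : A.bipartiteBelow G.Adj v = A.bipartiteAbove G.Adj v := by
    simp only [Finset.bipartiteBelow, Finset.bipartiteAbove, G.adj_comm]
  simp only [ncard_eq, ← below_eq_above]
  exact Finset.sum_card_bipartiteAbove_eq_sum_card_bipartiteBelow G.Adj

lemma two_mul_ncard_edges_within [Finite V] (T : Finset V) :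
    2 * {e : Sym2 V | e ∈ G.edgeSet ∧ ∀ v ∈ e, v ∈ T}.ncard =
      ∑ v ∈ T, (G.neighborSet v ∩ T).ncard := by
  classical
  have := Fintype.ofFinite V
  let H : SimpleGraph V := (G.induce (T : Set V)).spanningCoe
  have edges_eq : {e : Sym2 V | e ∈ G.edgeSet ∧ ∀ v ∈ e, v ∈ T} = H.edgeFinset := by
    ext e
    induction e with
    | _ a b =>
      rw [SimpleGraph.coe_edgeFinset, SimpleGraph.mem_edgeSet]
      simp [H]
  have degree_eq (v : V) : H.degree v = if v ∈ T then (G.neighborSet v ∩ T).ncard else 0 := by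
    rw [← SimpleGraph.card_neighborFinset_eq_degree, ← Set.ncard_coe_finset,
      SimpleGraph.coe_neighborFinset]
    split_ifs with hv
    · congr 1
      ext w
      simp [H, hv]
    · rw [Set.ncard_eq_zero]
      ext w
      simp [H, hv]
  rw [edges_eq, Set.ncard_coe_finset, ← H.sum_degrees_eq_twice_card_edges]
  simp only [degree_eq, Finset.sum_ite_mem, Finset.univ_inter]

lemma two_mul_ncard_edges_within_of_regular [Finite V] {T : Set V}
    (hT : ∀ v ∈ T, (G.neighborSet v ∩ T).ncard = d) :
    2 * {e : Sym2 V | e ∈ G.edgeSet ∧ ∀ v ∈ e, v ∈ T}.ncard = d * T.ncard := by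
  lift T to Finset V using T.toFinite
  simp only [Finset.mem_coe] at hT ⊢
  rw [two_mul_ncard_edges_within, Finset.sum_const_nat hT, Set.ncard_coe_finset, mul_comm]

end DoubleCounting

section IndependentDomination

variable {S : Set V}

lemma neighborSet_subset_compl_of_isIndepVertexSet (hS : G.IsIndepVertexSet S) {v : V}
    (hv : v ∈ S) : G.neighborSet v ⊆ Sᶜ :=
  fun _ hvw hw => hS hv hw hvw.ne hvw

lemma sum_compl_ncard_neighborSet_inter [Fintype V] [DecidableEq V] {S : Finset V}
    (hS : G.IsIndepVertexSet (S : Set V)) (hreg : ∀ v ∈ S, (G.neighborSet v).ncard = d) :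
    ∑ v ∈ Sᶜ, (G.neighborSet v ∩ S).ncard = d * S.card := by
  have neighbors_outside : ∀ v ∈ S, (G.neighborSet v ∩ (Sᶜ : Finset V)).ncard = d := by
    intro v hv
    rw [Finset.coe_compl, Set.inter_eq_left.2 (neighborSet_subset_compl_of_isIndepVertexSet hS hv),
      hreg v hv]
  rw [sum_ncard_neighborSet_inter_comm, Finset.sum_const_nat neighbors_outside, mul_comm]

lemma mul_ncard_compl_le_of_isKDominatingSet [Finite V] (hS : G.IsIndepVertexSet S)
    (hreg : ∀ v ∈ S, (G.neighborSet v).ncard = d) (hdom : IsKDominatingSet G k S) :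
    k * Sᶜ.ncard ≤ d * S.ncard := by
  classical
  have := Fintype.ofFinite V
  lift S to Finset V using S.toFinite
  rw [← Finset.coe_compl, Set.ncard_coe_finset, Set.ncard_coe_finset,
    ← sum_compl_ncard_neighborSet_inter hS hreg, mul_comm]
  exact Finset.card_nsmul_le_sum _ _ _ fun v hv => hdom v (by simpa using hv)

lemma mul_ncard_compl_eq_iff_of_isKDominatingSet [Finite V] (hS : G.IsIndepVertexSet S)
    (hreg : ∀ v ∈ S, (G.neighborSet v).ncard = d) (hdom : IsKDominatingSet G k S) :
    k * Sᶜ.ncard = d * S.ncard ↔ ∀ v ∉ S, (G.neighborSet v ∩ S).ncard = k := by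
  classical
  have := Fintype.ofFinite V
  lift S to Finset V using S.toFinite
  have sum_eq_iff := Finset.sum_eq_sum_iff_of_le (s := Sᶜ) (f := fun _ => k)
    (g := fun v => (G.neighborSet v ∩ S).ncard) fun v hv => hdom v (by simpa using hv)
  rw [sum_compl_ncard_neighborSet_inter hS hreg, Finset.sum_const, smul_eq_mul, mul_comm]
    at sum_eq_iff
  rw [← Finset.coe_compl, Set.ncard_coe_finset, Set.ncard_coe_finset, sum_eq_iff]
  simp only [Finset.mem_compl, Finset.mem_coe, eq_comm]

end IndependentDomination

section RegularAlliance

variable {S : Set V}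

lemma isGlobalOffensiveAlliance_iff_of_regular [Finite V]
    (hreg : ∀ v, (G.neighborSet v).ncard = d) :
    G.IsGlobalOffensiveAlliance S ↔ S.Nonempty ∧ IsKDominatingSet G (d / 2 + 1) S := by
  refine and_congr_right fun _ => forall₂_congr fun v _ => ?_
  have := Set.ncard_inter_add_ncard_sdiff_eq_ncard (G.neighborSet v) S
  have := hreg v
  lia

lemma ncard_neighborSet_inter_eq_iff (hd : d ≠ 0) {v : V}
    (hv : (G.neighborSet v).ncard = d) :
    (G.neighborSet v ∩ S).ncard = d / 2 + 1 ↔ (G.neighborSet v \ S).ncard = (d - 1) / 2 := by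
  have := Set.ncard_inter_add_ncard_sdiff_eq_ncard (G.neighborSet v) S
    (Set.finite_of_ncard_ne_zero (hv.trans_ne hd))
  lia

lemma mul_card_le_of_isKDominatingSet [Finite V] (hreg : ∀ v, (G.neighborSet v).ncard = d)
    (hS : G.IsIndepVertexSet S) (hdom : IsKDominatingSet G k S) :
    k * Nat.card V ≤ (d + k) * S.ncard := by
  have := mul_ncard_compl_le_of_isKDominatingSet hS (fun v _ => hreg v) hdom
  rw [← Set.ncard_add_ncard_compl S]
  linarith

lemma mul_card_eq_iff_of_isKDominatingSet [Finite V] (hreg : ∀ v, (G.neighborSet v).ncard = d)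
    (hS : G.IsIndepVertexSet S) (hdom : IsKDominatingSet G k S) :
    (d + k) * S.ncard = k * Nat.card V ↔ ∀ v ∉ S, (G.neighborSet v ∩ S).ncard = k := by
  rw [← mul_ncard_compl_eq_iff_of_isKDominatingSet hS (fun v _ => hreg v) hdom,
    ← Set.ncard_add_ncard_compl S]
  constructor <;> intro h <;> linarith

lemma exists_ncard_eq_globalIndepOffensiveAllianceNum
    (hex : ∃ S : Set V, G.IsGlobalOffensiveAlliance S ∧ G.IsIndepVertexSet S) :
    ∃ S : Set V, G.IsGlobalOffensiveAlliance S ∧ G.IsIndepVertexSet S ∧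
      S.ncard = G.globalIndepOffensiveAllianceNum := by
  obtain ⟨S, hA, hS⟩ := hex
  exact Nat.sInf_mem (s := {k | ∃ S : Set V,
    G.IsGlobalOffensiveAlliance S ∧ G.IsIndepVertexSet S ∧ S.ncard = k}) ⟨_, S, hA, hS, rfl⟩

lemma globalIndepOffensiveAllianceNum_eq_iff_of_regular [Finite V]
    (hreg : ∀ v, (G.neighborSet v).ncard = d)
    (hex : ∃ S : Set V, G.IsGlobalOffensiveAlliance S ∧ G.IsIndepVertexSet S) :
    (d + (d / 2 + 1)) * G.globalIndepOffensiveAllianceNum = (d / 2 + 1) * Nat.card V ↔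
      ∃ X : Set V, G.IsIndepVertexSet X ∧
        ∀ v ∉ X, (G.neighborSet v ∩ X).ncard = d / 2 + 1 := by
  obtain ⟨S, hSA, hSI, hS_card⟩ := exists_ncard_eq_globalIndepOffensiveAllianceNum hex
  obtain ⟨⟨s, -⟩, hS_dom⟩ := (isGlobalOffensiveAlliance_iff_of_regular hreg).1 hSA
  constructor
  · intro h
    rw [← hS_card] at h
    exact ⟨S, hSI, (mul_card_eq_iff_of_isKDominatingSet hreg hSI hS_dom).1 h⟩
  · rintro ⟨X, hXI, hX_exact⟩
    have hX_dom : IsKDominatingSet G (d / 2 + 1) X := fun v hv => (hX_exact v hv).ge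
    have hX_card := (mul_card_eq_iff_of_isKDominatingSet hreg hXI hX_dom).2 hX_exact
    have hX_nonempty : X.Nonempty := by
      have : Nonempty V := ⟨s⟩
      have : 0 < Nat.card V := Nat.card_pos
      refine Set.nonempty_of_ncard_ne_zero (right_ne_zero_of_mul (a := d + (d / 2 + 1)) ?_)
      rw [hX_card]
      positivity
    have hXA := (isGlobalOffensiveAlliance_iff_of_regular hreg).2 ⟨hX_nonempty, hX_dom⟩
    have num_le : G.globalIndepOffensiveAllianceNum ≤ X.ncard :=
      Nat.sInf_le ⟨X, hXA, hXI, rfl⟩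
    apply le_antisymm
    · exact (Nat.mul_le_mul_left _ num_le).trans_eq hX_card
    · rw [← hS_card]
      exact mul_card_le_of_isKDominatingSet hreg hSI hS_dom

lemma ncard_edges_compl_of_regular [Finite V] (hd : d ≠ 0)
    (hreg : ∀ v, (G.neighborSet v).ncard = d)
    (hS : G.IsIndepVertexSet S) (hout : ∀ v ∉ S, (G.neighborSet v \ S).ncard = (d - 1) / 2) :
    2 * (d + (d / 2 + 1)) * {e : Sym2 V | e ∈ G.edgeSet ∧ ∀ v ∈ e, v ∉ S}.ncard =
      d * ((d - 1) / 2) * Nat.card V := by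
  have hin : ∀ v ∉ S, (G.neighborSet v ∩ S).ncard = d / 2 + 1 := fun v hv =>
    (ncard_neighborSet_inter_eq_iff hd (hreg v)).2 (hout v hv)
  have cross_edges := (mul_ncard_compl_eq_iff_of_isKDominatingSet hS (fun v _ => hreg v)
    fun v hv => (hin v hv).ge).2 hin
  have inner_edges : 2 * {e : Sym2 V | e ∈ G.edgeSet ∧ ∀ v ∈ e, v ∉ S}.ncard =
      (d - 1) / 2 * Sᶜ.ncard :=
    two_mul_ncard_edges_within_of_regular hout
  calc 2 * (d + (d / 2 + 1)) * {e : Sym2 V | e ∈ G.edgeSet ∧ ∀ v ∈ e, v ∉ S}.ncard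
      = (d - 1) / 2 * (d * Sᶜ.ncard + (d / 2 + 1) * Sᶜ.ncard) := by
        rw [mul_right_comm, inner_edges]
        ring
    _ = d * ((d - 1) / 2) * Nat.card V := by
        rw [cross_edges, ← Set.ncard_add_ncard_compl S]
        ring

end RegularAlliance

end

theorem stmt_17_general {V : Type*} [Finite V] (G : SimpleGraph V) {d : ℕ} (hd : d ≠ 0)
    (hreg : ∀ v : V, (G.neighborSet v).ncard = d)
    (hex : ∃ S : Set V, G.IsGlobalOffensiveAlliance S ∧ G.IsIndepVertexSet S) :
    (d + (d / 2 + 1)) * G.globalIndepOffensiveAllianceNum = (d / 2 + 1) * Nat.card V ↔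
      ∃ X : Set V, G.IsIndepVertexSet X ∧
        (∀ v ∉ X, (G.neighborSet v \ X).ncard = (d - 1) / 2) ∧
        2 * (d + (d / 2 + 1)) * {e : Sym2 V | e ∈ G.edgeSet ∧ ∀ v ∈ e, v ∉ X}.ncard =
          d * ((d - 1) / 2) * Nat.card V := by
  rw [globalIndepOffensiveAllianceNum_eq_iff_of_regular hreg hex]
  refine exists_congr fun X => and_congr_right fun hX => ?_
  simp only [ncard_neighborSet_inter_eq_iff hd (hreg _)]
  exact (and_iff_left_of_imp (ncard_edges_compl_of_regular hd hreg hX)).symm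

theorem stmt_17 {V : Type*} [Fintype V] (G : SimpleGraph V)
    (hconn : G.Connected) (hcubic : ∀ v : V, (G.neighborSet v).ncard = 3)
    (hex : ∃ S : Set V, G.IsGlobalOffensiveAlliance S ∧ G.IsIndepVertexSet S) :
    (G.globalIndepOffensiveAllianceNum : ℝ) = 2 * Fintype.card V / 5 ↔
      ∃ X : Set V, G.IsIndepVertexSet X ∧
        (∀ v ∉ X, (G.neighborSet v \ X).ncard = 1) ∧
        (({e : Sym2 V | e ∈ G.edgeSet ∧ ∀ v ∈ e, v ∉ X}.ncard : ℝ) =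
          3 * Fintype.card V / 10) := by
  field_simp
  norm_cast
  simpa [mul_comm] using stmt_17_general G three_ne_zero hcubic hex
end
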